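/- Let Â, A : Fin K → ℝ, λ ∈ ℝ, ρ ∈ ℕ, and let B = {k : A k < λ} be the set of low-quality indices. If |B| > ρ, then the nonconformity score S(Â, A) = sInf {s ∈ ℝ : L_λ(𝒮(Â, s), A) ≤ ρ} equals the (ρ+1)-th largest element of the multiset {Â k : k ∈ B} (counted with multiplicity), and the admissible set {s ∈ ℝ : L_λ(𝒮(Â, s), A) ≤ ρ} equals the open ray (S(Â, A), ∞). -/

import Mathlib

/-- The filtered set `𝒮(Â, s) = {k : Â k ≥ s}` as a `Finset`. -/
noncomputable def filteredSet {K : ℕ} (Ahat : Fin K → ℝ) (s : ℝ) : Finset (Fin K) :=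
  Finset.univ.filter (fun k => Ahat k ≥ s)

/-- The counting loss `L_λ(T, A) = |{k ∈ T : A k < λ}|`. -/
noncomputable def countLoss {K : ℕ} (lam : ℝ) (T : Finset (Fin K)) (A : Fin K → ℝ) : ℕ :=
  (T.filter (fun k => A k < lam)).card

/-- The nonconformity score `S(Â, A) = sInf {s : L_λ(𝒮(Â, s), A) ≤ ρ}`. -/
noncomputable def nonconfScore {K : ℕ} (lam : ℝ) (ρ : ℕ) (Ahat A : Fin K → ℝ) : ℝ :=
  sInf {s : ℝ | countLoss lam (filteredSet Ahat s) A ≤ ρ}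

/-!
For a list sorted in decreasing order, the entries that are at least `s` form an initial segment,
so at most `n` of them exist exactly when the entry at index `n` lies strictly below `s`.
The loss at threshold `s` counts the surrogate scores at least `s` among the low-quality indices,
so the admissible thresholds form an open ray and the score is its endpoint.
-/

theorem countP_eq_card_filter_get {α : Type*} (p : α → Prop) [DecidablePred p] (l : List α) :
    l.countP p = (Finset.univ.filter fun i ↦ p (l.get i)).card := by
  calc l.countP p
      = (Finset.univ.val.map l.get).countP p := by
        rw [Fin.univ_val_map, List.ofFn_get, Multiset.coe_countP]
    _ = (Finset.univ.filter fun i ↦ p (l.get i)).card := Multiset.countP_map ..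

theorem countP_ge_le_iff_getD_sort_lt {α : Type*} [LinearOrder α] (m : Multiset α) {n : ℕ}
    (hn : n < m.card) (s d : α) :
    m.countP (s ≤ ·) ≤ n ↔ (m.sort (· ≥ ·)).getD n d < s := by
  set l := m.sort (· ≥ ·) with hl
  have hnl : n < l.length := by rwa [Multiset.length_sort]
  have hcount : m.countP (s ≤ ·) = (Finset.univ.filter fun i ↦ s ≤ l.get i).card := by
    rw [← countP_eq_card_filter_get, ← Multiset.coe_countP, hl, Multiset.sort_eq]
  have hanti : Antitone l.get := (m.pairwise_sort (· ≥ ·)).sortedGE.antitone_get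
  have hlt := Tuple.lt_card_ge_iff_apply_ge_of_antitone (j := ⟨n, hnl⟩) (a := s) hanti
  rw [hcount, List.getD_eq_getElem _ _ hnl]
  exact not_lt.symm.trans (hlt.not.trans not_le)

theorem setOf_countP_ge_le_eq_Ioi {α : Type*} [LinearOrder α] (m : Multiset α) {n : ℕ}
    (hn : n < m.card) (d : α) :
    {s | m.countP (s ≤ ·) ≤ n} = Set.Ioi ((m.sort (· ≥ ·)).getD n d) :=
  Set.ext fun s ↦ countP_ge_le_iff_getD_sort_lt m hn s d

theorem countLoss_filteredSet {K : ℕ} (Ahat A : Fin K → ℝ) (lam s : ℝ) :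
    countLoss lam (filteredSet Ahat s) A =
      ((Finset.univ.filter fun k ↦ A k < lam).val.map Ahat).countP (s ≤ ·) := by
  rw [countLoss, filteredSet, Finset.filter_comm, Multiset.countP_map]
  rfl

theorem stmt_5_general {α : Type*} [ConditionallyCompleteLinearOrder α] [NoMaxOrder α]
    [DenselyOrdered α] (m : Multiset α) {n : ℕ} (hn : n < m.card) (d : α) :
    sInf {s | m.countP (s ≤ ·) ≤ n} = (m.sort (· ≥ ·)).getD n d ∧
    {s | m.countP (s ≤ ·) ≤ n} = Set.Ioi (sInf {s | m.countP (s ≤ ·) ≤ n}) := by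
  simp only [setOf_countP_ge_le_eq_Ioi m hn d, csInf_Ioi, and_self]

theorem stmt_5 {K : ℕ} (Ahat A : Fin K → ℝ) (lam : ℝ) (ρ : ℕ)
    (hρ : ρ < (Finset.univ.filter (fun k => A k < lam)).card) :
    nonconfScore lam ρ Ahat A =
      (((Finset.univ.filter (fun k => A k < lam)).val.map Ahat).sort (· ≥ ·)).getD ρ 0 ∧
    {s : ℝ | countLoss lam (filteredSet Ahat s) A ≤ ρ} =
      Set.Ioi (nonconfScore lam ρ Ahat A) := by
  simp only [nonconfScore, countLoss_filteredSet]
  exact stmt_5_general _ (by rwa [Multiset.card_map]) 0
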